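/- Let n ≥ 2 be an integer and let η be the admissible reactive profile. Writing η₀ = η(0), one has η₀ > 0, η'(0) = −κ, η''(0) = η₀^{2n}, η'''(0) = 0, and η''''(0) = −2n η₀^{2n−2}(κ² − η₀^{2n+1}); moreover the coefficients η₂ = η₀^{2n}/2 and η₄ = (n/12) η₀^{2n−2}(κ² − η₀^{2n+1}) are strictly positive (in particular κ² > η₀^{2n+1}). -/

import Mathlib

noncomputable def kap : ℝ := 1 / Real.sqrt Real.pi

def IsReactiveProfile (n : ℕ) (η : ℝ → ℝ) : Prop :=
  ContDiffOn ℝ 2 η (Set.Ici 0) ∧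
  (∀ z ∈ Set.Ici (0:ℝ), 0 < η z) ∧
  (∀ z ∈ Set.Ici (0:ℝ),
    derivWithin (derivWithin η (Set.Ici 0)) (Set.Ici 0) z
      = (2 * kap * z * η z + (η z) ^ 2) ^ n) ∧
  derivWithin η (Set.Ici 0) 0 = -kap ∧
  Filter.Tendsto η Filter.atTop (nhds 0)

/-!
Write `u = 2κzη + η²` for the base of the reaction term, so that `η'' = uⁿ`; completing the square,
`u = w² - κ²z²` with `w = η + κz`. Hence `u' = 2(w w' - κ²z)`, `u'' = 2(w'² + w uⁿ - κ²)` and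
`u''' = 2(3 w' uⁿ + w (uⁿ)')`, where `w'(0) = u'(0) = 0`, and the Taylor data of `η` at the origin
are read off from `η'' = uⁿ`.

For the bound suppose `κ² ≤ η₀²ⁿ⁺¹`, that is, `u''(0) ≥ 0`. The formula for `u'''` makes this
self-reinforcing: as long as `u''' ≥ 0`, also `u'' ≥ 0` and `u' ≥ 0`, whence `u''' ≥ 6 w' uⁿ > 0`.
The process starts, even if `u''(0) = 0`, because `u'''(0) = 0 < u''''(0)`. Thus `u ≥ η₀²` forever,
`η'' ≥ η₀²ⁿ`, and `η` grows without bound.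
-/

open Filter Set Topology

section Calculus

variable {f f' : ℝ → ℝ} {a : ℝ}

lemma eventually_pos_of_hasDerivWithinAt_pos {d : ℝ} (hf : HasDerivWithinAt f d (Ici a) a)
    (hd : 0 < d) (hfa : f a = 0) : ∀ᶠ z in 𝓝[>] a, 0 < f z := by
  have hslope : Tendsto (slope f a) (𝓝[>] a) (𝓝 d) :=
    (hasDerivWithinAt_iff_tendsto_slope' self_notMem_Ioi).1 hf.Ioi_of_Ici
  filter_upwards [hslope.eventually_const_lt hd, self_mem_nhdsWithin] with z hz haz
  rw [slope_def_field, hfa, sub_zero] at hz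
  exact (div_pos_iff_of_pos_right (sub_pos.2 haz)).1 hz

lemma monotoneOn_of_forall_hasDerivWithinAt_nonneg {D : Set ℝ} (hD : Convex ℝ D)
    (hf : ∀ z ∈ D, HasDerivWithinAt f (f' z) D z) (hf' : ∀ z ∈ D, 0 ≤ f' z) : MonotoneOn f D :=
  monotoneOn_of_hasDerivWithinAt_nonneg hD (fun z hz ↦ (hf z hz).continuousWithinAt)
    (fun z hz ↦ (hf z (interior_subset hz)).mono interior_subset)
    fun z hz ↦ hf' z (interior_subset hz)

lemma strictMonoOn_of_forall_hasDerivWithinAt_pos {D : Set ℝ} (hD : Convex ℝ D)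
    (hf : ∀ z ∈ D, HasDerivWithinAt f (f' z) D z) (hf' : ∀ z ∈ D, 0 < f' z) : StrictMonoOn f D :=
  strictMonoOn_of_hasDerivWithinAt_pos hD (fun z hz ↦ (hf z hz).continuousWithinAt)
    (fun z hz ↦ (hf z (interior_subset hz)).mono interior_subset)
    fun z hz ↦ hf' z (interior_subset hz)

lemma tendsto_atTop_of_forall_le_hasDerivWithinAt {c : ℝ} (hc : 0 < c)
    (hf : ∀ z ∈ Ici a, HasDerivWithinAt f (f' z) (Ici a) z) (hf' : ∀ z ∈ Ici a, c ≤ f' z) :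
    Tendsto f atTop atTop := by
  have hmono : MonotoneOn (fun z ↦ f z - c * z) (Ici a) :=
    monotoneOn_of_forall_hasDerivWithinAt_nonneg (convex_Ici a)
      (fun z hz ↦ (hf z hz).sub ((hasDerivWithinAt_id z _).const_mul c))
      fun z hz ↦ by simpa using hf' z hz
  have hline : Tendsto (fun z ↦ c * z + (f a - c * a)) atTop atTop :=
    tendsto_atTop_add_const_right _ _ (tendsto_id.const_mul_atTop hc)
  refine tendsto_atTop_mono' _ ?_ hline
  filter_upwards [eventually_ge_atTop a] with z hz
  linarith [hmono self_mem_Ici hz hz]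

lemma tendsto_atTop_of_forall_le_hasDerivWithinAt₂ {f'' : ℝ → ℝ} {c : ℝ} (hc : 0 < c)
    (hf : ∀ z ∈ Ici a, HasDerivWithinAt f (f' z) (Ici a) z)
    (hf' : ∀ z ∈ Ici a, HasDerivWithinAt f' (f'' z) (Ici a) z) (hf'' : ∀ z ∈ Ici a, c ≤ f'' z) :
    Tendsto f atTop atTop := by
  have hf'_lim : Tendsto f' atTop atTop := tendsto_atTop_of_forall_le_hasDerivWithinAt hc hf' hf''
  obtain ⟨b, hb⟩ := eventually_atTop.1 (hf'_lim.eventually_ge_atTop 1)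
  have hsub : Ici (max a b) ⊆ Ici a := Ici_subset_Ici.2 (le_max_left a b)
  exact tendsto_atTop_of_forall_le_hasDerivWithinAt one_pos
    (fun z hz ↦ (hf z (hsub hz)).mono hsub) fun z hz ↦ hb z ((le_max_right a b).trans hz)

lemma nonneg_of_forall_nonneg_imp_deriv₂_pos {f'' : ℝ → ℝ}
    (hf : ∀ z ∈ Ici a, HasDerivWithinAt f (f' z) (Ici a) z)
    (hf' : ∀ z ∈ Ici a, HasDerivWithinAt f' (f'' z) (Ici a) z) (hf'' : ContinuousOn f'' (Ici a))
    (hfa : 0 ≤ f a) (hf'a : 0 ≤ f' a) (hstart : ∀ᶠ z in 𝓝[>] a, 0 < f'' z)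
    (hstep : ∀ z ∈ Ioi a, 0 ≤ f z → 0 < f'' z) {z : ℝ} (hz : z ∈ Ici a) : 0 ≤ f z := by
  have nonneg_integral {g g' : ℝ → ℝ} {t : ℝ}
      (hg : ∀ z ∈ Ici a, HasDerivWithinAt g (g' z) (Ici a) z) (hga : 0 ≤ g a)
      (hg' : ∀ y ∈ Icc a t, 0 ≤ g' y) : ∀ y ∈ Icc a t, 0 ≤ g y := fun y hy ↦
    hga.trans <| monotoneOn_of_forall_hasDerivWithinAt_nonneg (convex_Icc a t)
      (fun x hx ↦ (hg x hx.1).mono Icc_subset_Ici_self) hg' ⟨le_rfl, hy.1.trans hy.2⟩ hy hy.1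
  have nonneg_of_deriv₂ {t : ℝ} (ht : Icc a t ⊆ {y | 0 ≤ f'' y}) : ∀ y ∈ Icc a t, 0 ≤ f y :=
    nonneg_integral hf hfa (nonneg_integral hf' hf'a ht)
  have hf''a : 0 ≤ f'' a :=
    ge_of_tendsto ((hf'' a self_mem_Ici).mono Ioi_subset_Ici_self) (hstart.mono fun _ ↦ le_of_lt)
  have hclosed : IsClosed ({y | 0 ≤ f'' y} ∩ Icc a z) := by
    rw [inter_comm]
    exact (hf''.mono Icc_subset_Ici_self).preimage_isClosed_of_isClosed isClosed_Icc isClosed_Ici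
  suffices Icc a z ⊆ {y | 0 ≤ f'' y} from nonneg_of_deriv₂ this z ⟨hz, le_rfl⟩
  refine hclosed.Icc_subset_of_forall_mem_nhdsGT_of_Icc_subset hf''a fun t ht hsub ↦ ?_
  suffices ∀ᶠ y in 𝓝[>] t, 0 < f'' y from this.mono fun _ ↦ le_of_lt
  obtain rfl | hat := ht.1.eq_or_lt
  · exact hstart
  · have hpos : 0 < f'' t := hstep t hat (nonneg_of_deriv₂ hsub t ⟨ht.1, le_rfl⟩)
    have hcont : ContinuousWithinAt f'' (Ioi t) t :=
      (hf'' t ht.1).mono fun y hy ↦ ht.1.trans (le_of_lt hy)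
    exact hcont.eventually_const_lt hpos

end Calculus

/-- A solution on `[0, ∞)` of the reactive ODE `η'' = (2κzη + η²)ⁿ` with initial slope `-κ`, for an
arbitrary constant `κ`. Unlike in `IsReactiveProfile`, positivity and decay are not part of the
notion; as there, derivatives at the endpoint `0` are one-sided. -/
structure IsReactiveSolution (κ : ℝ) (n : ℕ) (η : ℝ → ℝ) : Prop where
  contDiffOn : ContDiffOn ℝ 2 η (Ici 0)
  derivWithin₂_eq : ∀ z ∈ Ici (0 : ℝ),
    derivWithin (derivWithin η (Ici 0)) (Ici 0) z = (2 * κ * z * η z + η z ^ 2) ^ n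
  derivWithin_zero : derivWithin η (Ici 0) 0 = -κ

namespace IsReactiveSolution

/-- The base `u = 2κzη + η²` of the reaction term. -/
def base (κ : ℝ) (η : ℝ → ℝ) (z : ℝ) : ℝ := 2 * κ * z * η z + η z ^ 2

/-- The derivative of `base`, written as `2(w w' - κ²z)` with `w = η + κz`. -/
noncomputable def baseDeriv (κ : ℝ) (η : ℝ → ℝ) (z : ℝ) : ℝ :=
  2 * ((η z + κ * z) * (derivWithin η (Ici 0) z + κ) - κ ^ 2 * z)

/-- The second derivative of `base` along a solution, `2(w'² + w uⁿ - κ²)` with `w = η + κz`. -/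
noncomputable def baseDeriv₂ (κ : ℝ) (n : ℕ) (η : ℝ → ℝ) (z : ℝ) : ℝ :=
  2 * ((derivWithin η (Ici 0) z + κ) ^ 2 + (η z + κ * z) * base κ η z ^ n - κ ^ 2)

/-- The derivative of the reaction rate `uⁿ`; along a solution it is the third derivative of `η`. -/
noncomputable def rateDeriv (κ : ℝ) (n : ℕ) (η : ℝ → ℝ) (z : ℝ) : ℝ :=
  n * base κ η z ^ (n - 1) * baseDeriv κ η z

/-- The third derivative of `base` along a solution, `2(3w'uⁿ + w(uⁿ)')` with `w = η + κz`. -/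
noncomputable def baseDeriv₃ (κ : ℝ) (n : ℕ) (η : ℝ → ℝ) (z : ℝ) : ℝ :=
  2 * (3 * (derivWithin η (Ici 0) z + κ) * base κ η z ^ n + (η z + κ * z) * rateDeriv κ n η z)

variable {κ : ℝ} {n : ℕ} {η : ℝ → ℝ} {z : ℝ}

lemma base_zero : base κ η 0 = η 0 ^ 2 := by simp [base]

section Derivatives

variable (h : IsReactiveSolution κ n η)

include h

lemma hasDerivWithinAt (hz : z ∈ Ici 0) :
    HasDerivWithinAt η (derivWithin η (Ici 0) z) (Ici 0) z :=
  (h.contDiffOn.differentiableOn two_ne_zero z hz).hasDerivWithinAt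

lemma hasDerivWithinAt_derivWithin (hz : z ∈ Ici 0) :
    HasDerivWithinAt (derivWithin η (Ici 0)) (base κ η z ^ n) (Ici 0) z := by
  have hC : ContDiffOn ℝ 1 (derivWithin η (Ici 0)) (Ici 0) :=
    h.contDiffOn.derivWithin (uniqueDiffOn_Ici 0) (by norm_num)
  rw [base, ← h.derivWithin₂_eq z hz]
  exact (hC.differentiableOn one_ne_zero z hz).hasDerivWithinAt

lemma hasDerivWithinAt_add_mul (hz : z ∈ Ici 0) :
    HasDerivWithinAt (fun z ↦ η z + κ * z) (derivWithin η (Ici 0) z + κ) (Ici 0) z :=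
  ((h.hasDerivWithinAt hz).add ((hasDerivWithinAt_id z _).const_mul κ)).congr_deriv (by simp)

lemma hasDerivWithinAt_base (hz : z ∈ Ici 0) :
    HasDerivWithinAt (base κ η) (baseDeriv κ η z) (Ici 0) z := by
  have hsq : base κ η = fun z ↦ (η z + κ * z) ^ 2 - κ ^ 2 * z ^ 2 := by
    funext z
    simp only [base]
    ring
  rw [hsq]
  refine (((h.hasDerivWithinAt_add_mul hz).pow 2).sub
    (((hasDerivWithinAt_id z _).pow 2).const_mul (κ ^ 2))).congr_deriv ?_
  simp only [baseDeriv, id]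
  push_cast
  ring

lemma hasDerivWithinAt_baseDeriv (hz : z ∈ Ici 0) :
    HasDerivWithinAt (baseDeriv κ η) (baseDeriv₂ κ n η z) (Ici 0) z := by
  refine ((((h.hasDerivWithinAt_add_mul hz).mul
    ((h.hasDerivWithinAt_derivWithin hz).add_const κ)).sub
    ((hasDerivWithinAt_id z _).const_mul (κ ^ 2))).const_mul 2).congr_deriv ?_
  simp only [baseDeriv₂]
  ring

lemma hasDerivWithinAt_base_pow (hz : z ∈ Ici 0) :
    HasDerivWithinAt (fun z ↦ base κ η z ^ n) (rateDeriv κ n η z) (Ici 0) z :=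
  (h.hasDerivWithinAt_base hz).pow n

lemma hasDerivWithinAt_baseDeriv₂ (hz : z ∈ Ici 0) :
    HasDerivWithinAt (baseDeriv₂ κ n η) (baseDeriv₃ κ n η z) (Ici 0) z := by
  refine (((((h.hasDerivWithinAt_derivWithin hz).add_const κ).pow 2).add
    ((h.hasDerivWithinAt_add_mul hz).mul (h.hasDerivWithinAt_base_pow hz))).sub_const
    (κ ^ 2) |>.const_mul 2).congr_deriv ?_
  simp only [baseDeriv₃]
  push_cast
  ring

lemma baseDeriv_zero : baseDeriv κ η 0 = 0 := by
  simp [baseDeriv, h.derivWithin_zero]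

lemma rateDeriv_zero : rateDeriv κ n η 0 = 0 := by
  rw [rateDeriv, h.baseDeriv_zero, mul_zero]

lemma baseDeriv₂_zero : baseDeriv₂ κ n η 0 = 2 * (η 0 ^ (2 * n + 1) - κ ^ 2) := by
  simp only [baseDeriv₂, h.derivWithin_zero, base_zero]
  ring

lemma baseDeriv₃_zero : baseDeriv₃ κ n η 0 = 0 := by
  simp [baseDeriv₃, h.derivWithin_zero, h.rateDeriv_zero]

lemma hasDerivWithinAt_rateDeriv_zero :
    HasDerivWithinAt (rateDeriv κ n η)
      (n * (η 0 ^ 2) ^ (n - 1) * (2 * (η 0 ^ (2 * n + 1) - κ ^ 2))) (Ici 0) 0 := by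
  refine ((((h.hasDerivWithinAt_base self_mem_Ici).pow (n - 1)).const_mul (n : ℝ)).mul
    (h.hasDerivWithinAt_baseDeriv self_mem_Ici)).congr_deriv ?_
  simp [h.baseDeriv_zero, h.baseDeriv₂_zero, base_zero]

lemma hasDerivWithinAt_baseDeriv₃_zero :
    HasDerivWithinAt (baseDeriv₃ κ n η)
      (6 * (η 0 ^ (2 * n)) ^ 2
        + 4 * n * η 0 * (η 0 ^ 2) ^ (n - 1) * (η 0 ^ (2 * n + 1) - κ ^ 2)) (Ici 0) 0 := by
  refine ((((((h.hasDerivWithinAt_derivWithin self_mem_Ici).add_const κ).const_mul 3).mul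
    (h.hasDerivWithinAt_base_pow self_mem_Ici)).add
    ((h.hasDerivWithinAt_add_mul self_mem_Ici).mul
      h.hasDerivWithinAt_rateDeriv_zero)).const_mul 2).congr_deriv ?_
  simp only [h.derivWithin_zero, h.rateDeriv_zero, base_zero]
  ring

lemma continuousOn_baseDeriv₃ : ContinuousOn (baseDeriv₃ κ n η) (Ici 0) := by
  have hη : ContinuousOn η (Ici 0) := h.contDiffOn.continuousOn
  have hη' : ContinuousOn (derivWithin η (Ici 0)) (Ici 0) := fun z hz ↦
    (h.hasDerivWithinAt_derivWithin hz).continuousWithinAt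
  unfold baseDeriv₃ rateDeriv baseDeriv base
  fun_prop

lemma derivWithin₂_zero :
    derivWithin (derivWithin η (Ici 0)) (Ici 0) 0 = η 0 ^ (2 * n) := by
  rw [h.derivWithin₂_eq 0 self_mem_Ici, ← base, base_zero, pow_mul]

lemma derivWithin₃_eq (hz : z ∈ Ici 0) :
    derivWithin (derivWithin (derivWithin η (Ici 0)) (Ici 0)) (Ici 0) z = rateDeriv κ n η z := by
  rw [derivWithin_congr h.derivWithin₂_eq (h.derivWithin₂_eq z hz)]
  exact (h.hasDerivWithinAt_base_pow hz).derivWithin (uniqueDiffOn_Ici 0 z hz)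

lemma derivWithin₃_zero :
    derivWithin (derivWithin (derivWithin η (Ici 0)) (Ici 0)) (Ici 0) 0 = 0 := by
  rw [h.derivWithin₃_eq self_mem_Ici, h.rateDeriv_zero]

lemma derivWithin₄_zero :
    derivWithin (derivWithin (derivWithin (derivWithin η (Ici 0)) (Ici 0)) (Ici 0)) (Ici 0) 0
      = -(2 * (n : ℝ)) * η 0 ^ (2 * n - 2) * (κ ^ 2 - η 0 ^ (2 * n + 1)) := by
  rw [derivWithin_congr (fun _ ↦ h.derivWithin₃_eq) (h.derivWithin₃_eq self_mem_Ici),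
    h.hasDerivWithinAt_rateDeriv_zero.derivWithin (uniqueDiffOn_Ici 0 0 self_mem_Ici),
    ← pow_mul, Nat.mul_sub_one]
  ring

end Derivatives

section Positive

variable (hκ : 0 ≤ κ) (hpos : ∀ z ∈ Ici (0 : ℝ), 0 < η z)

include hκ hpos

lemma base_pos (hz : z ∈ Ici 0) : 0 < base κ η z := by
  have hz₀ : 0 ≤ z := hz
  have hηz : 0 < η z := hpos z hz
  unfold base
  positivity

variable (h : IsReactiveSolution κ n η)

include h

lemma derivWithin_add_pos (hz : 0 < z) : 0 < derivWithin η (Ici 0) z + κ := by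
  have hmono : StrictMonoOn (derivWithin η (Ici 0)) (Ici 0) :=
    strictMonoOn_of_forall_hasDerivWithinAt_pos (convex_Ici 0)
      (fun y hy ↦ h.hasDerivWithinAt_derivWithin hy) fun y hy ↦ pow_pos (base_pos hκ hpos hy) n
  linarith [hmono self_mem_Ici hz.le hz, h.derivWithin_zero]

lemma baseDeriv₃_pos (hz : 0 < z) (hu : 0 ≤ baseDeriv κ η z) : 0 < baseDeriv₃ κ n η z := by
  have hw : 0 < η z + κ * z := add_pos_of_pos_of_nonneg (hpos z hz.le) (mul_nonneg hκ hz.le)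
  have hw' : 0 < derivWithin η (Ici 0) z + κ := h.derivWithin_add_pos hκ hpos hz
  have hu₀ : 0 < base κ η z := base_pos hκ hpos hz.le
  unfold baseDeriv₃ rateDeriv
  positivity

lemma baseDeriv_nonneg (hle : κ ^ 2 ≤ η 0 ^ (2 * n + 1)) (hz : z ∈ Ici 0) :
    0 ≤ baseDeriv κ η z := by
  have hη₀ : 0 < η 0 := hpos 0 self_mem_Ici
  have hgap : 0 ≤ η 0 ^ (2 * n + 1) - κ ^ 2 := sub_nonneg.2 hle
  exact nonneg_of_forall_nonneg_imp_deriv₂_pos (fun _ ↦ h.hasDerivWithinAt_baseDeriv)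
    (fun _ ↦ h.hasDerivWithinAt_baseDeriv₂) h.continuousOn_baseDeriv₃ h.baseDeriv_zero.ge
    (h.baseDeriv₂_zero ▸ mul_nonneg zero_le_two hgap)
    (eventually_pos_of_hasDerivWithinAt_pos h.hasDerivWithinAt_baseDeriv₃_zero (by positivity)
      h.baseDeriv₃_zero)
    (fun _ ↦ h.baseDeriv₃_pos hκ hpos) hz

theorem tendsto_atTop_of_sq_le (hle : κ ^ 2 ≤ η 0 ^ (2 * n + 1)) : Tendsto η atTop atTop := by
  have hη₀ : 0 < η 0 := hpos 0 self_mem_Ici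
  have hmono : MonotoneOn (base κ η) (Ici 0) :=
    monotoneOn_of_forall_hasDerivWithinAt_nonneg (convex_Ici 0)
      (fun _ ↦ h.hasDerivWithinAt_base) fun _ ↦ h.baseDeriv_nonneg hκ hpos hle
  refine tendsto_atTop_of_forall_le_hasDerivWithinAt₂ (pow_pos (pow_pos hη₀ 2) n)
    (fun _ ↦ h.hasDerivWithinAt) (fun _ ↦ h.hasDerivWithinAt_derivWithin) fun z hz ↦ ?_
  rw [← base_zero (κ := κ)]
  exact pow_le_pow_left₀ (base_pos hκ hpos self_mem_Ici).le (hmono self_mem_Ici hz hz) n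

end Positive

end IsReactiveSolution

lemma kap_pos : 0 < kap := by
  unfold kap
  positivity

lemma IsReactiveProfile.isReactiveSolution {n : ℕ} {η : ℝ → ℝ} (hη : IsReactiveProfile n η) :
    IsReactiveSolution kap n η :=
  ⟨hη.1, hη.2.2.1, hη.2.2.2.1⟩

theorem reactive_profile_taylor_at_zero_general {κ : ℝ} (hκ : 0 ≤ κ) {n : ℕ} (hn : n ≠ 0)
    {η : ℝ → ℝ} (h : IsReactiveSolution κ n η) (hpos : ∀ z ∈ Ici (0 : ℝ), 0 < η z)
    (hlim : ¬ Tendsto η atTop atTop) :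
    0 < η 0 ∧
    derivWithin η (Ici 0) 0 = -κ ∧
    derivWithin (derivWithin η (Ici 0)) (Ici 0) 0 = η 0 ^ (2 * n) ∧
    derivWithin (derivWithin (derivWithin η (Ici 0)) (Ici 0)) (Ici 0) 0 = 0 ∧
    derivWithin (derivWithin (derivWithin (derivWithin η (Ici 0)) (Ici 0)) (Ici 0)) (Ici 0) 0
      = -(2 * (n : ℝ)) * η 0 ^ (2 * n - 2) * (κ ^ 2 - η 0 ^ (2 * n + 1)) ∧
    0 < η 0 ^ (2 * n) / 2 ∧
    0 < ((n : ℝ) / 12) * η 0 ^ (2 * n - 2) * (κ ^ 2 - η 0 ^ (2 * n + 1)) ∧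
    η 0 ^ (2 * n + 1) < κ ^ 2 := by
  have hη₀ : 0 < η 0 := hpos 0 self_mem_Ici
  have hlt : η 0 ^ (2 * n + 1) < κ ^ 2 :=
    not_le.1 fun hle ↦ hlim (h.tendsto_atTop_of_sq_le hκ hpos hle)
  exact ⟨hη₀, h.derivWithin_zero, h.derivWithin₂_zero, h.derivWithin₃_zero, h.derivWithin₄_zero,
    by positivity, mul_pos (by positivity) (sub_pos.2 hlt), hlt⟩

/-- Taylor data of the reactive profile at the origin: with η₀ = η(0) one has η₀ > 0,
η'(0) = −κ, η''(0) = η₀^{2n}, η'''(0) = 0, η''''(0) = −2n η₀^{2n−2}(κ² − η₀^{2n+1}),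
and the coefficients η₂ = η₀^{2n}/2, η₄ = (n/12) η₀^{2n−2}(κ² − η₀^{2n+1}) are
strictly positive (in particular κ² > η₀^{2n+1}). -/
theorem reactive_profile_taylor_at_zero (n : ℕ) (hn : 2 ≤ n)
    (η : ℝ → ℝ) (hη : IsReactiveProfile n η) :
    0 < η 0 ∧
    derivWithin η (Set.Ici 0) 0 = -kap ∧
    derivWithin (derivWithin η (Set.Ici 0)) (Set.Ici 0) 0 = η 0 ^ (2 * n) ∧
    derivWithin (derivWithin (derivWithin η (Set.Ici 0)) (Set.Ici 0)) (Set.Ici 0) 0 = 0 ∧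
    derivWithin (derivWithin (derivWithin (derivWithin η (Set.Ici 0)) (Set.Ici 0))
        (Set.Ici 0)) (Set.Ici 0) 0
      = -(2 * (n : ℝ)) * η 0 ^ (2 * n - 2) * (kap ^ 2 - η 0 ^ (2 * n + 1)) ∧
    0 < η 0 ^ (2 * n) / 2 ∧
    0 < ((n : ℝ) / 12) * η 0 ^ (2 * n - 2) * (kap ^ 2 - η 0 ^ (2 * n + 1)) ∧
    η 0 ^ (2 * n + 1) < kap ^ 2 := by
  exact reactive_profile_taylor_at_zero_general kap_pos.le (by omega) hη.isReactiveSolution hη.2.1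
    (not_tendsto_atTop_of_tendsto_nhds hη.2.2.2.2)
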